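/- Reconstructions from marginals are V-factorizable: for every density g̃ on E^{V+W} and every i ∈ W, the density α_{W,i}(β_W(g̃)) is V-factorizable, i.e. α_{W,i}(β_W(g̃)) = α_{W,j}(β_W(α_{W,i}(β_W(g̃)))) for every j ∈ W. -/

import Mathlib

open Finset
open scoped Classical

/-- Patterns over the integer interval `{A,...,B}` with values in `E`. -/
abbrev Pat (E : Type) (A B : ℤ) : Type := {x // x ∈ Finset.Icc A B} → E

/-- Evaluation of a pattern at an integer site (arbitrary value outside the domain). -/
noncomputable def ev {E : Type} [Nonempty E] {A B : ℤ} (φ : Pat E A B) (j : ℤ) : E :=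
  if h : j ∈ Finset.Icc A B then φ ⟨j, h⟩ else Classical.arbitrary E

/-- The window `σ_i(φ)|_V` of a pattern `φ`, a pattern on `V = {-p,...,q}`. -/
noncomputable def win {E : Type} [Nonempty E] (p q : ℕ) {A B : ℤ} (i : ℤ) (φ : Pat E A B) :
    Pat E (-(p : ℤ)) (q : ℤ) :=
  fun v => ev φ (i + v.1)

/-- A density on a finite type: nonnegative weights summing to one. -/
def IsDensity {α : Type} [Fintype α] (g : α → ℝ) : Prop :=
  (∀ x, 0 ≤ g x) ∧ ∑ x, g x = 1

/-- The distribution associated with a weight function, evaluated on an event. -/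
noncomputable def Pr {α : Type} [Fintype α] (g : α → ℝ) (P : α → Prop) : ℝ :=
  ∑ x, if P x then g x else 0

/-- Conditional probability `μ[P | Q] = μ[P ∩ Q]/μ[Q]` (`0` if `0/0`). -/
noncomputable def condPr {α : Type} [Fintype α] (g : α → ℝ) (P Q : α → Prop) : ℝ :=
  Pr g (fun x => P x ∧ Q x) / Pr g Q

/-- The marginalization operator `β_W`. -/
noncomputable def beta {E : Type} [Fintype E] [DecidableEq E] [Nonempty E]
    (p q : ℕ) (t u : ℤ) (g : Pat E (-(p : ℤ) - t) ((q : ℤ) + u) → ℝ) (i : ℤ)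
    (ψ : Pat E (-(p : ℤ)) (q : ℤ)) : ℝ :=
  Pr g (fun χ => win p q i χ = ψ)

/-- The reconstruction operator `α_{W,i}`. -/
noncomputable def alpha {E : Type} [Fintype E] [DecidableEq E] [Nonempty E]
    (p q : ℕ) (t u : ℤ) (g : ℤ → Pat E (-(p : ℤ)) (q : ℤ) → ℝ) (i : ℤ)
    (ψ : Pat E (-(p : ℤ) - t) ((q : ℤ) + u)) : ℝ :=
  (∏ k ∈ Finset.Icc (-t) (i - 1),
      condPr (g k) (fun χ => ev χ (-(p : ℤ)) = ev ψ (k + -(p : ℤ)))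
        (fun χ => ∀ v ∈ Finset.Icc (-(p : ℤ) + 1) (q : ℤ), ev χ v = ev ψ (k + v))) *
    g i (win p q i ψ) *
    (∏ l ∈ Finset.Icc (i + 1) u,
      condPr (g l) (fun χ => ev χ (q : ℤ) = ev ψ (l + (q : ℤ)))
        (fun χ => ∀ v ∈ Finset.Icc (-(p : ℤ)) ((q : ℤ) - 1), ev χ v = ev ψ (l + v)))

/-- Extendable de Bruijn densities. -/
def Extendable {E : Type} [Fintype E] [DecidableEq E] [Nonempty E]
    (p q : ℕ) (t u : ℤ) (g : ℤ → Pat E (-(p : ℤ)) (q : ℤ) → ℝ) : Prop :=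
  ∀ i ∈ Finset.Icc (-t) u, ∀ φ, 0 < g i φ →
    ∃ ψ : Pat E (-(p : ℤ) - t) ((q : ℤ) + u),
      win p q i ψ = φ ∧ ∀ j ∈ Finset.Icc (-t) u, 0 < g j (win p q j ψ)

/-- The event `{χ : χ|_S = ψ|_S}`. -/
def agreeOn {E : Type} [Nonempty E] {A B : ℤ} (S : Finset ℤ) (ψ χ : Pat E A B) : Prop :=
  ∀ j ∈ S, ev χ j = ev ψ j

/-! Write `x l` and `y l` for the `g̃`-marginals on the window `{l-p,...,l+q}` and on the overlap
`{l-p,...,l-1+q}` of two consecutive windows. The conditional probabilities making up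
`α_{W,i}(β_W(g̃))` are `x k / y (k+1)` to the left of `i` and `x l / y l` to its right, so the
product is `(∏ x l) / (∏ y l)`, in which `i` no longer occurs. Summing this Markov weight over its
first or last site sums a conditional probability to `1` and leaves the Markov weight of a shorter
range; peeling down to a single window shows that the reconstruction has the same window marginals
as `g̃`, and hence is its own reconstruction from any `j ∈ W`. -/

section IntervalProducts

variable {R : Type*}

lemma prod_Ioc_mul_prod_Ioc [CommMonoid R] {ι : Type*} [LinearOrder ι] [LocallyFiniteOrder ι]
    (f : ι → R) {a b c : ι} (hab : a ≤ b) (hbc : b ≤ c) :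
    (∏ k ∈ Ioc a b, f k) * ∏ k ∈ Ioc b c, f k = ∏ k ∈ Ioc a c, f k := by
  rw [← prod_union (Ioc_disjoint_Ioc_of_le le_rfl), Ioc_union_Ioc_eq_Ioc hab hbc]

lemma prod_Icc_div_succ_mul_prod_Icc_div [DivisionCommMonoid R] (x y : ℤ → R) {a i b : ℤ}
    (hai : a ≤ i) (hib : i ≤ b) :
    (∏ k ∈ Icc a (i - 1), x k / y (k + 1)) * x i * ∏ l ∈ Icc (i + 1) b, x l / y l =
      (∏ l ∈ Icc a b, x l) / ∏ l ∈ Ioc a b, y l := by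
  have hx : (∏ k ∈ Ico a i, x k) * x i * ∏ l ∈ Ioc i b, x l = ∏ l ∈ Icc a b, x l := by
    rw [prod_Ico_mul_eq_prod_Icc hai, ← mul_prod_Ioc_eq_prod_Icc hai, mul_assoc,
      prod_Ioc_mul_prod_Ioc x hai hib, mul_prod_Ioc_eq_prod_Icc (hai.trans hib)]
  have hy : (∏ k ∈ Ico a i, y (k + 1)) * ∏ l ∈ Ioc i b, y l = ∏ l ∈ Ioc a b, y l := by
    rw [prod_Ico_add' y a i 1, Ico_add_one_add_one_eq_Ioc, prod_Ioc_mul_prod_Ioc y hai hib]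
  rw [Icc_sub_one_right_eq_Ico, Icc_add_one_left_eq_Ioc, prod_div_distrib, prod_div_distrib,
    div_mul_eq_mul_div, div_mul_div_comm, hx, hy]

end IntervalProducts

section Probability

variable {α : Type} [Fintype α] {g : α → ℝ} {P Q : α → Prop}

lemma Pr_nonneg (hg : ∀ x, 0 ≤ g x) : 0 ≤ Pr g P :=
  sum_nonneg fun x _ => ite_nonneg (hg x) le_rfl

lemma Pr_mono (hg : ∀ x, 0 ≤ g x) (hPQ : ∀ x, P x → Q x) : Pr g P ≤ Pr g Q := by
  simp only [Pr, ← sum_filter]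
  exact sum_le_sum_of_subset_of_nonneg (monotone_filter_right _ fun x _ => hPQ x) fun x _ _ => hg x

lemma Pr_eq_sum_fiber {β : Type*} [Fintype β] (g : α → ℝ) (P : α → Prop) (f : α → β) :
    Pr g P = ∑ y, Pr g fun x => f x = y ∧ P x := by
  simp only [Pr]
  rw [sum_comm]
  refine sum_congr rfl fun x _ => ?_
  by_cases hx : P x <;> simp [hx]

lemma Pr_map {β : Type} [Fintype β] (g : α → ℝ) (f : α → β) (Q : β → Prop) :
    Pr (fun y => Pr g fun x => f x = y) Q = Pr g fun x => Q (f x) := by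
  rw [Pr_eq_sum_fiber g _ f, Pr]
  refine sum_congr rfl fun y _ => ?_
  have hQ (x : α) : f x = y ∧ Q (f x) ↔ f x = y ∧ Q y := and_congr_right fun hx => by rw [hx]
  by_cases hy : Q y <;> simp [Pr, hQ, hy]

end Probability

section Patterns

variable {E : Type} [Nonempty E] {A B : ℤ}

lemma ev_coe (φ : Pat E A B) (x : {x // x ∈ Icc A B}) : ev φ x = φ x :=
  dif_pos x.2

lemma ev_update (φ : Pat E A B) (b : {x // x ∈ Icc A B}) (e : E) (j : ℤ) :
    ev (Function.update φ b e) j = if j = b then e else ev φ j := by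
  simp only [ev, Function.update_apply, Subtype.ext_iff]
  grind

lemma eq_iff_agreeOn_Icc {χ ψ : Pat E A B} : χ = ψ ↔ agreeOn (Icc A B) ψ χ := by
  refine ⟨fun h j _ => h ▸ rfl, fun h => funext fun x => ?_⟩
  rw [← ev_coe χ x, ← ev_coe ψ x, h x x.2]

lemma agreeOn.mono {S T : Finset ℤ} {ψ χ : Pat E A B} (hST : S ⊆ T) (h : agreeOn T ψ χ) :
    agreeOn S ψ χ :=
  fun j hj => h j (hST hj)

lemma agreeOn.congr_left {S : Finset ℤ} {ψ ψ' χ : Pat E A B} (h : agreeOn S ψ ψ') :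
    agreeOn S ψ χ ↔ agreeOn S ψ' χ :=
  forall₂_congr fun j hj => by rw [h j hj]

lemma agreeOn_update {S : Finset ℤ} {b : {x // x ∈ Icc A B}} (hb : ↑b ∉ S) (ψ : Pat E A B) (e : E) :
    agreeOn S ψ (Function.update ψ b e) :=
  fun j hj => by rw [ev_update, if_neg (ne_of_mem_of_not_mem hj hb)]

lemma agreeOn_insert_update {S : Finset ℤ} {b : {x // x ∈ Icc A B}} (hb : ↑b ∉ S)
    {ψ χ : Pat E A B} {e : E} :
    agreeOn (insert ↑b S) (Function.update ψ b e) χ ↔ χ b = e ∧ agreeOn S ψ χ := by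
  rw [(agreeOn_update hb ψ e).congr_left, agreeOn, forall_mem_insert, ev_update, if_pos rfl, ev_coe]
  rfl

variable {p q : ℕ} {k : ℤ}

lemma ev_win (χ : Pat E A B) {v : ℤ} (hv : v ∈ Icc (-(p : ℤ)) q) :
    ev (win p q k χ) v = ev χ (k + v) :=
  dif_pos hv

lemma forall_ev_win_eq_iff_agreeOn {χ ψ : Pat E A B} {a b : ℤ} (ha : -(p : ℤ) ≤ a) (hb : b ≤ q) :
    (∀ v ∈ Icc a b, ev (win p q k χ) v = ev ψ (k + v)) ↔ agreeOn (Icc (k + a) (k + b)) ψ χ := by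
  rw [agreeOn, ← image_add_left_Icc, forall_mem_image]
  exact forall₂_congr fun v hv => by rw [ev_win χ (Icc_subset_Icc ha hb hv)]

lemma win_eq_win_iff_agreeOn {χ ψ : Pat E A B} :
    win p q k χ = win p q k ψ ↔ agreeOn (Icc (k - p) (k + q)) ψ χ := by
  rw [sub_eq_add_neg, ← forall_ev_win_eq_iff_agreeOn le_rfl le_rfl, eq_iff_agreeOn_Icc, agreeOn]
  exact forall₂_congr fun v hv => by rw [ev_win ψ hv]

lemma win_surjective (hA : A ≤ k - p) (hB : k + q ≤ B) :
    Function.Surjective (win p q k : Pat E A B → Pat E (-(p : ℤ)) q) := by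
  refine fun φ => ⟨fun x => ev φ (x - k), eq_iff_agreeOn_Icc.mpr fun v hv => ?_⟩
  have hv' : k + v ∈ Icc A B := by grind
  rw [ev_win _ hv, ev, dif_pos hv', add_sub_cancel_left]

end Patterns

section Marginals

variable {E : Type} [Fintype E] [Nonempty E] {A B : ℤ}

/-- The marginal of `g` on the sites in `S`, at the restriction of `ψ` to `S`. Keeping the whole
pattern `ψ` as the argument makes marginals on different sets of sites functions on one type. -/
noncomputable def marginal (g : Pat E A B → ℝ) (S : Finset ℤ) (ψ : Pat E A B) : ℝ :=
  Pr g (agreeOn S ψ)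

lemma marginal_congr (g : Pat E A B → ℝ) {S : Finset ℤ} {ψ ψ' : Pat E A B} (h : agreeOn S ψ ψ') :
    marginal g S ψ = marginal g S ψ' := by
  simp only [marginal, Pr, h.congr_left]

lemma marginal_eq_zero_of_subset {g : Pat E A B → ℝ} (hg : ∀ χ, 0 ≤ g χ) {S T : Finset ℤ}
    (hST : S ⊆ T) {ψ : Pat E A B} (h : marginal g S ψ = 0) : marginal g T ψ = 0 :=
  le_antisymm (h ▸ Pr_mono hg fun _ => agreeOn.mono hST) (Pr_nonneg hg)

lemma marginal_Icc_self (g : Pat E A B → ℝ) : marginal g (Icc A B) = g := by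
  ext ψ
  simp [marginal, Pr, ← eq_iff_agreeOn_Icc]

lemma marginal_eq_sum_update (g : Pat E A B → ℝ) {S : Finset ℤ} {b : {x // x ∈ Icc A B}}
    (hb : ↑b ∉ S) (ψ : Pat E A B) :
    marginal g S ψ = ∑ e, marginal g (insert ↑b S) (Function.update ψ b e) := by
  simp only [marginal, Pr_eq_sum_fiber g (agreeOn S ψ) (fun χ => χ b)]
  exact sum_congr rfl fun e _ => congrArg (Pr g) <| funext fun χ =>
    propext (agreeOn_insert_update hb).symm

/-- The quotient in `hf` is the `g`-conditional probability of the site `b` given those in `C`, so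
it sums to `1` over the values at `b`, except where it is `0 / 0 = 0`; there `hG` is needed. -/
lemma marginal_eq_of_marginal_insert_eq_mul_div {f g G : Pat E A B → ℝ} {S C : Finset ℤ}
    {b : {x // x ∈ Icc A B}} (hb : ↑b ∉ S) (hCS : C ⊆ S)
    (hf : ∀ ψ, marginal f (insert ↑b S) ψ =
      G ψ * (marginal g (insert ↑b C) ψ / marginal g C ψ))
    (hG_congr : ∀ ψ ψ', agreeOn S ψ ψ' → G ψ = G ψ')
    (hG : ∀ ψ, marginal g C ψ = 0 → G ψ = 0) :
    marginal f S = G := by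
  ext ψ
  have hSψ := agreeOn_update hb ψ
  calc marginal f S ψ
      = ∑ e, marginal f (insert ↑b S) (Function.update ψ b e) := marginal_eq_sum_update f hb ψ
    _ = ∑ e, G ψ * (marginal g (insert ↑b C) (Function.update ψ b e) / marginal g C ψ) :=
        sum_congr rfl fun e _ => by
          rw [hf, hG_congr _ _ (hSψ e), marginal_congr g ((hSψ e).mono hCS)]
    _ = G ψ * marginal g C ψ / marginal g C ψ := by
        rw [← mul_sum, ← sum_div, ← marginal_eq_sum_update g fun h => hb (hCS h), mul_div_assoc]
    _ = G ψ := mul_div_cancel_of_imp (hG ψ)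

end Marginals

section MarkovWeight

variable {E : Type} [Fintype E] [Nonempty E] {A B : ℤ} {p q : ℕ} {a b : ℤ}

/-- The weight on the sites `{a-p,...,b+q}` of the Markov chain of order `p + q` that has the same
marginals as `g` on the windows `{l-p,...,l+q}`, `a ≤ l ≤ b`: the product of these marginals divided
by the product of the marginals on the overlaps of consecutive windows. -/
noncomputable def markovWeight (p q : ℕ) (g : Pat E A B → ℝ) (a b : ℤ) (ψ : Pat E A B) : ℝ :=
  (∏ l ∈ Icc a b, marginal g (Icc (l - p) (l + q)) ψ) /
    ∏ l ∈ Ioc a b, marginal g (Icc (l - p) (l - 1 + q)) ψ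

lemma markovWeight_self (g : Pat E A B → ℝ) (k : ℤ) :
    markovWeight p q g k k = marginal g (Icc (k - p) (k + q)) := by
  ext ψ
  simp [markovWeight]

lemma markovWeight_congr (g : Pat E A B → ℝ) {ψ ψ' : Pat E A B}
    (h : agreeOn (Icc (a - p) (b + q)) ψ ψ') :
    markovWeight p q g a b ψ = markovWeight p q g a b ψ' := by
  refine congrArg₂ (· / ·) (prod_congr rfl fun l hl => ?_) (prod_congr rfl fun l hl => ?_)
  all_goals exact marginal_congr g (h.mono (Icc_subset_Icc (by grind) (by grind)))

lemma markovWeight_eq_mul_last (g : Pat E A B → ℝ) (hab : a < b) (ψ : Pat E A B) :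
    markovWeight p q g a b ψ = markovWeight p q g a (b - 1) ψ *
      (marginal g (Icc (b - p) (b + q)) ψ / marginal g (Icc (b - p) (b - 1 + q)) ψ) := by
  rw [markovWeight, ← insert_Icc_sub_one_right_eq_Icc hab.le,
    ← insert_Ioc_sub_one_right_eq_Ioc hab, prod_insert (by simp), prod_insert (by simp),
    mul_div_mul_comm, mul_comm, markovWeight]

lemma markovWeight_eq_mul_first (g : Pat E A B → ℝ) (hab : a < b) (ψ : Pat E A B) :
    markovWeight p q g a b ψ = markovWeight p q g (a + 1) b ψ *
      (marginal g (Icc (a - p) (a + q)) ψ / marginal g (Icc (a + 1 - p) (a + q)) ψ) := by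
  rw [markovWeight, ← insert_Icc_add_one_left_eq_Icc hab.le,
    ← insert_Ioc_add_one_left_eq_Ioc hab, prod_insert (by simp), prod_insert (by simp),
    mul_div_mul_comm, mul_comm, add_sub_cancel_right, markovWeight]

lemma markovWeight_eq_zero {g : Pat E A B → ℝ} (hg : ∀ χ, 0 ≤ g χ) {S : Finset ℤ} {l : ℤ}
    (hl : l ∈ Icc a b) (hS : S ⊆ Icc (l - p) (l + q)) {ψ : Pat E A B} (h : marginal g S ψ = 0) :
    markovWeight p q g a b ψ = 0 := by
  rw [markovWeight, prod_eq_zero hl (marginal_eq_zero_of_subset hg hS h), zero_div]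

lemma marginal_eq_markovWeight_sub_one {f g : Pat E A B → ℝ} (hg : ∀ χ, 0 ≤ g χ) (hab : a < b)
    (hA : A ≤ a - p) (hB : b + q ≤ B)
    (hf : marginal f (Icc (a - p) (b + q)) = markovWeight p q g a b) :
    marginal f (Icc (a - p) (b - 1 + q)) = markovWeight p q g a (b - 1) := by
  have hinsert {c : ℤ} (hc : c ≤ b - p) :
      insert (b + q) (Icc c (b - 1 + q)) = Icc c (b + q) := by
    rw [← add_sub_right_comm, insert_Icc_sub_one_right_eq_Icc (by omega)]
  refine marginal_eq_of_marginal_insert_eq_mul_div (b := ⟨b + q, by grind⟩)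
    (C := Icc (b - p) (b - 1 + q)) (by simp) (Icc_subset_Icc_left (by omega)) (fun ψ => ?_)
    (fun _ _ => markovWeight_congr g)
    fun ψ => markovWeight_eq_zero hg (l := b - 1) (by grind) (Icc_subset_Icc_left (by omega))
  rw [hinsert (by omega), hinsert le_rfl, hf, markovWeight_eq_mul_last g hab]

lemma marginal_eq_markovWeight_add_one {f g : Pat E A B → ℝ} (hg : ∀ χ, 0 ≤ g χ) (hab : a < b)
    (hA : A ≤ a - p) (hB : b + q ≤ B)
    (hf : marginal f (Icc (a - p) (b + q)) = markovWeight p q g a b) :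
    marginal f (Icc (a + 1 - p) (b + q)) = markovWeight p q g (a + 1) b := by
  have hinsert {c : ℤ} (hc : a + q ≤ c) :
      insert (a - p : ℤ) (Icc (a + 1 - p) c) = Icc (a - p : ℤ) c := by
    rw [← sub_add_eq_add_sub, insert_Icc_add_one_left_eq_Icc (by omega)]
  refine marginal_eq_of_marginal_insert_eq_mul_div (b := ⟨a - p, by grind⟩)
    (C := Icc (a + 1 - p) (a + q)) (by simp) (Icc_subset_Icc_right (by omega)) (fun ψ => ?_)
    (fun _ _ => markovWeight_congr g)
    fun ψ => markovWeight_eq_zero hg (l := a + 1) (by grind) (Icc_subset_Icc_right (by omega))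
  rw [hinsert (by omega), hinsert le_rfl, hf, markovWeight_eq_mul_first g hab]

lemma marginal_eq_markovWeight_of_subrange {f g : Pat E A B → ℝ} (hg : ∀ χ, 0 ≤ g χ)
    (hA : A ≤ a - p) (hB : b + q ≤ B)
    (hf : marginal f (Icc (a - p) (b + q)) = markovWeight p q g a b) {c d : ℤ}
    (hac : a ≤ c) (hcd : c ≤ d) (hdb : d ≤ b) :
    marginal f (Icc (c - p) (d + q)) = markovWeight p q g c d := by
  have hlast : marginal f (Icc (a - p) (d + q)) = markovWeight p q g a d := by
    have had := hac.trans hcd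
    clear hcd
    induction d, hdb using Int.leInductionDown with
    | base => exact hf
    | pred d hdb ih =>
      exact marginal_eq_markovWeight_sub_one hg (by omega) hA (by omega) (ih (by omega))
  induction c, hac using Int.leInduction with
  | base => exact hlast
  | succ c hac ih =>
    exact marginal_eq_markovWeight_add_one hg (by omega) (by omega) (by omega) (ih (by omega))

end MarkovWeight

section Reconstruction

variable {E : Type} [Fintype E] [DecidableEq E] [Nonempty E] {p q : ℕ} {t u : ℤ}
  {g : Pat E (-(p : ℤ) - t) ((q : ℤ) + u) → ℝ} {i k : ℤ}

lemma Pr_beta (Q : Pat E (-(p : ℤ)) (q : ℤ) → Prop) :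
    Pr (beta p q t u g k) Q = Pr g fun χ => Q (win p q k χ) :=
  Pr_map g (win p q k) Q

lemma Pr_beta_eq_marginal {a b : ℤ} (ha : -(p : ℤ) ≤ a) (hb : b ≤ q)
    (ψ : Pat E (-(p : ℤ) - t) ((q : ℤ) + u)) :
    Pr (beta p q t u g k) (fun χ => ∀ v ∈ Icc a b, ev χ v = ev ψ (k + v)) =
      marginal g (Icc (k + a) (k + b)) ψ := by
  simp only [Pr_beta, forall_ev_win_eq_iff_agreeOn ha hb]
  rfl

lemma beta_win_eq_marginal (ψ : Pat E (-(p : ℤ) - t) ((q : ℤ) + u)) :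
    beta p q t u g k (win p q k ψ) = marginal g (Icc (k - p) (k + q)) ψ := by
  simp only [beta, win_eq_win_iff_agreeOn]
  rfl

lemma condPr_beta_first_site (ψ : Pat E (-(p : ℤ) - t) ((q : ℤ) + u)) :
    condPr (beta p q t u g k) (fun χ => ev χ (-(p : ℤ)) = ev ψ (k + -(p : ℤ)))
        (fun χ => ∀ v ∈ Icc (-(p : ℤ) + 1) q, ev χ v = ev ψ (k + v)) =
      marginal g (Icc (k - p) (k + q)) ψ / marginal g (Icc (k + 1 - p) (k + q)) ψ := by
  have hwindow (χ : Pat E (-(p : ℤ)) q) :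
      (ev χ (-(p : ℤ)) = ev ψ (k + -(p : ℤ)) ∧ ∀ v ∈ Icc (-(p : ℤ) + 1) q, ev χ v = ev ψ (k + v)) ↔
        ∀ v ∈ Icc (-(p : ℤ)) q, ev χ v = ev ψ (k + v) := by
    rw [← insert_Icc_add_one_left_eq_Icc (show -(p : ℤ) ≤ q by omega), forall_mem_insert]
  simp only [condPr, hwindow]
  rw [Pr_beta_eq_marginal le_rfl le_rfl, Pr_beta_eq_marginal (by omega) le_rfl]
  ring_nf

lemma condPr_beta_last_site (ψ : Pat E (-(p : ℤ) - t) ((q : ℤ) + u)) :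
    condPr (beta p q t u g k) (fun χ => ev χ (q : ℤ) = ev ψ (k + (q : ℤ)))
        (fun χ => ∀ v ∈ Icc (-(p : ℤ)) ((q : ℤ) - 1), ev χ v = ev ψ (k + v)) =
      marginal g (Icc (k - p) (k + q)) ψ / marginal g (Icc (k - p) (k - 1 + q)) ψ := by
  have hwindow (χ : Pat E (-(p : ℤ)) q) :
      (ev χ q = ev ψ (k + q) ∧ ∀ v ∈ Icc (-(p : ℤ)) (q - 1), ev χ v = ev ψ (k + v)) ↔
        ∀ v ∈ Icc (-(p : ℤ)) q, ev χ v = ev ψ (k + v) := by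
    rw [← insert_Icc_sub_one_right_eq_Icc (show -(p : ℤ) ≤ q by omega), forall_mem_insert]
  simp only [condPr, hwindow]
  rw [Pr_beta_eq_marginal le_rfl le_rfl, Pr_beta_eq_marginal le_rfl (by omega)]
  ring_nf

lemma alpha_beta_eq_markovWeight (hi : i ∈ Icc (-t) u) :
    alpha p q t u (beta p q t u g) i = markovWeight p q g (-t) u := by
  ext ψ
  rw [mem_Icc] at hi
  simp only [alpha, condPr_beta_first_site, condPr_beta_last_site, beta_win_eq_marginal,
    markovWeight, ← prod_Icc_div_succ_mul_prod_Icc_div _ _ hi.1 hi.2, add_sub_cancel_right]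

lemma beta_alpha_beta (hg : ∀ χ, 0 ≤ g χ) (hi : i ∈ Icc (-t) u) (hk : k ∈ Icc (-t) u) :
    beta p q t u (alpha p q t u (beta p q t u g) i) k = beta p q t u g k := by
  rw [mem_Icc] at hk
  have hfull : marginal (markovWeight p q g (-t) u) (Icc (-t - p) (u + q)) =
      markovWeight p q g (-t) u := by
    rw [show Icc (-t - p) (u + q) = Icc (-(p : ℤ) - t) (q + u) by grind, marginal_Icc_self]
  ext φ
  obtain ⟨ψ, rfl⟩ : ∃ ψ : Pat E (-(p : ℤ) - t) (q + u), win p q k ψ = φ :=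
    win_surjective (by omega) (by omega) φ
  rw [alpha_beta_eq_markovWeight hi, beta_win_eq_marginal, beta_win_eq_marginal,
    marginal_eq_markovWeight_of_subrange hg (by omega) (by omega) hfull hk.1 le_rfl hk.2,
    markovWeight_self]

lemma alpha_congr {m m' : ℤ → Pat E (-(p : ℤ)) (q : ℤ) → ℝ} (h : ∀ k ∈ Icc (-t) u, m k = m' k)
    (hi : i ∈ Icc (-t) u) : alpha p q t u m i = alpha p q t u m' i := by
  ext ψ
  rw [alpha, alpha, h i hi]
  refine congrArg₂ (· * ·) (congrArg (· * _) (prod_congr rfl fun k hk => ?_))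
    (prod_congr rfl fun k hk => ?_)
  all_goals rw [h k (by grind)]

end Reconstruction

/-- reconstructions from marginals are `V`-factorizable. -/
theorem stmt_7
    (E : Type) [Fintype E] [DecidableEq E] [Nonempty E]
    (p q : ℕ) (t u : ℤ) (htu : -t ≤ u)
    (gtil : Pat E (-(p : ℤ) - t) ((q : ℤ) + u) → ℝ) (hgtil : IsDensity gtil)
    (i : ℤ) (hi : i ∈ Finset.Icc (-t) u) :
    ∀ j ∈ Finset.Icc (-t) u,
      alpha p q t u (beta p q t u (alpha p q t u (beta p q t u gtil) i)) j =
        alpha p q t u (beta p q t u gtil) i := by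
  intro j hj
  rw [alpha_congr (fun k hk => beta_alpha_beta hgtil.1 hi hk) hj, alpha_beta_eq_markovWeight hj,
    alpha_beta_eq_markovWeight hi]
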